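/- Let 𝒜 be a unital C*-algebra, 𝒮 ⊆ 𝒜 an operator system, and φ: 𝒮 → M_n(ℂ) a linear map. Then φ is completely positive if and only if its dual functional s_φ: M_n(𝒮) → ℂ satisfies s_φ(S) ≥ 0 for every S ∈ M_n(𝒮) that is positive in the C*-algebra M_n(𝒜). -/

import Mathlib

/-!
If `φ` is completely positive and `s ∈ Mₙ(S)` is positive, write `[φ(sᵢⱼ)] = B* B` in `Mₙ(Mₙ(ℂ))`;
then `s_φ(s) = ∑ₖₗ |∑ⱼ (Bₖⱼ)ₗⱼ|² ≥ 0`.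

Conversely, let `s = b* b ∈ Mₘ(S)`. The quadratic form of `[φ(sⱼₖ)]` at `v ∈ ℂᵐ ⊗ ℂⁿ`, regarded as
a scalar `m × n` matrix `V`, equals `s_φ(V* s V)`. The matrix `V* s V = (bV)* (bV)` has entries
in `S`, and it is positive in `Mₙ(𝒜)` because `Mₙ(𝒜)` is a C⋆-algebra
(`isPosElem_conjTranspose_mul_self`); this is needed since `bV` is rectangular. So the form is
nonnegative, and over `ℂ` this gives positive semidefiniteness, hence a factorization in
`Mₘ(Mₙ(ℂ))`.
-/

open scoped ComplexOrder
open Matrix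

/-- An element of a star ring is *positive* if it equals `star b * b` for some `b`;
in a (matrix algebra over a) C*-algebra this is the usual notion of positivity. -/
def IsPosElem {R : Type*} [Ring R] [StarRing R] (x : R) : Prop :=
  ∃ b : R, x = star b * b

variable {A : Type*} [NormedRing A] [StarRing A] [CStarRing A]
  [CompleteSpace A] [NormedAlgebra ℂ A] [StarModule ℂ A]

/-- The canonical image in `Mₘ(𝒜)` of a matrix with entries in the operator system `S`. -/
def matCoe {S : Submodule ℂ A} {m : ℕ} (s : Matrix (Fin m) (Fin m) S) :
    Matrix (Fin m) (Fin m) A :=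
  Matrix.of fun j k => (s j k : A)

/-- `J_m(S)`: matrices over `S` which are positive in `Mₘ(𝒜)` together with their
partial transpose. -/
def memJ {S : Submodule ℂ A} {m : ℕ} (s : Matrix (Fin m) (Fin m) S) : Prop :=
  IsPosElem (matCoe s) ∧ IsPosElem (matCoe s)ᵀ

/-- A map `φ : S → Mₙ(ℂ)` is positive if it sends positive elements of `𝒜` lying in `S`
to positive semidefinite matrices. -/
def IsPosMap {S : Submodule ℂ A} {n : ℕ}
    (φ : S →ₗ[ℂ] Matrix (Fin n) (Fin n) ℂ) : Prop :=
  ∀ s : S, IsPosElem (s : A) → IsPosElem (φ s)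

/-- Complete positivity of `φ : S → Mₙ(ℂ)`: every positive matrix over `S` is sent,
entrywise, to a positive element of `Mₘ(Mₙ(ℂ))`. -/
def IsCPMap {S : Submodule ℂ A} {n : ℕ}
    (φ : S →ₗ[ℂ] Matrix (Fin n) (Fin n) ℂ) : Prop :=
  ∀ (m : ℕ) (s : Matrix (Fin m) (Fin m) S),
    IsPosElem (matCoe s) → IsPosElem (s.map ⇑φ)

/-- `φ` is co-completely positive if `transpose ∘ φ` is completely positive. -/
def IsCoCPMap {S : Submodule ℂ A} {n : ℕ}
    (φ : S →ₗ[ℂ] Matrix (Fin n) (Fin n) ℂ) : Prop :=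
  ∀ (m : ℕ) (s : Matrix (Fin m) (Fin m) S),
    IsPosElem (matCoe s) → IsPosElem (s.map fun a => (φ a)ᵀ)

/-- `φ` is decomposable if it is the sum of a completely positive and a
co-completely positive map. -/
noncomputable def IsDecomposable {S : Submodule ℂ A} {n : ℕ}
    (φ : S →ₗ[ℂ] Matrix (Fin n) (Fin n) ℂ) : Prop :=
  ∃ ψ η : S →ₗ[ℂ] Matrix (Fin n) (Fin n) ℂ,
    IsCPMap ψ ∧ IsCoCPMap η ∧ φ = ψ + η

/-- The dual functional `s_φ` on `Mₙ(S)`, `s_φ([x_{ij}]) = ∑_{i,j} (φ(x_{ij}))_{ij}`. -/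
noncomputable def dualFunc {S : Submodule ℂ A} {n : ℕ}
    (φ : S →ₗ[ℂ] Matrix (Fin n) (Fin n) ℂ)
    (x : Matrix (Fin n) (Fin n) S) : ℂ :=
  ∑ i, ∑ j, φ (x i j) i j

/-- The cone `S⁺ ⊗ Mₙ(ℂ)⁺` inside `Mₙ(𝒜)`: finite sums `∑ sₗ ⊗ xₗ` with `sₗ ∈ S`
positive in `𝒜` and `xₗ` positive semidefinite. -/
def posCone (S : Submodule ℂ A) (n : ℕ) : Set (Matrix (Fin n) (Fin n) A) :=
  { T | ∃ (k : ℕ) (s : Fin k → A) (x : Fin k → Matrix (Fin n) (Fin n) ℂ),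
      (∀ l, s l ∈ S ∧ IsPosElem (s l)) ∧ (∀ l, IsPosElem (x l)) ∧
      T = ∑ l, Matrix.of fun p q => x l p q • s l }


/-- Over `ℂ`, nonnegativity of the quadratic form already forces the matrix to be Hermitian. -/
lemma posSemidef_of_quadratic_nonneg {ι : Type*} [Fintype ι] [DecidableEq ι]
    (M : Matrix ι ι ℂ) (h : ∀ v : ι → ℂ, 0 ≤ star v ⬝ᵥ (M *ᵥ v)) : M.PosSemidef := by
  rw [← Matrix.isPositive_toEuclideanLin_iff, LinearMap.isPositive_iff_complex]
  intro x
  have hx := h x.ofLp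
  have e : inner ℂ (M.toEuclideanLin x) x = star (star x.ofLp ⬝ᵥ (M *ᵥ x.ofLp)) := by
    rw [← inner_conj_symm]
    simp [EuclideanSpace.inner_eq_star_dotProduct, dotProduct_comm]
  obtain ⟨h1, h2⟩ := Complex.nonneg_iff.mp hx
  rw [e]
  refine ⟨?_, by simpa using h1⟩
  apply Complex.ext <;> simp [← h2]

/-- Sums of positive elements of a C⋆-algebra are positive. -/
lemma isPosElem_sum_star_mul_self {R : Type*} [CStarAlgebra R] {m : ℕ} (r : Fin m → R) :
    IsPosElem (∑ k, star (r k) * r k) := by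
  let _ : PartialOrder R := CStarAlgebra.spectralOrder R
  have _ : StarOrderedRing R := CStarAlgebra.spectralOrderedRing R
  exact CStarAlgebra.nonneg_iff_eq_star_mul_self.mp
    (Finset.sum_nonneg fun k _ => star_mul_self_nonneg (r k))

/-- In the C⋆-algebra `Mₙ(𝒜)`, every `W* W` with `W` rectangular is of the form `c* c` with `c`
square: it is the sum of the elements `rₖ* rₖ`, where `rₖ` carries the `k`-th row of `W`. -/
lemma isPosElem_conjTranspose_mul_self_aux {R : Type*} [CStarAlgebra R] {m n : ℕ}
    (W : Matrix (Fin m) (Fin n) R) : IsPosElem (Wᴴ * W) := by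
  cases n with
  | zero => exact ⟨0, Subsingleton.elim _ _⟩
  | succ n =>
    let _ : PartialOrder R := CStarAlgebra.spectralOrder R
    have _ : StarOrderedRing R := CStarAlgebra.spectralOrderedRing R
    -- `r k` has the `k`-th row of `W` as its row `0` and zeros elsewhere.
    let r : Fin m → CStarMatrix (Fin (n + 1)) (Fin (n + 1)) R := fun k =>
      CStarMatrix.ofMatrix (Matrix.of fun i j => if i = 0 then W k j else 0)
    have hsum : CStarMatrix.ofMatrix (Wᴴ * W) = ∑ k, star (r k) * r k := by
      ext i j
      rw [CStarMatrix.ofMatrix_apply, Matrix.mul_apply]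
      have : (∑ k, star (r k) * r k) i j = ∑ k, (star (r k) * r k) i j :=
        Matrix.sum_apply i j Finset.univ
          (fun k => CStarMatrix.ofMatrix.symm (star (r k) * r k))
      rw [this]
      refine Finset.sum_congr rfl fun k _ => ?_
      rw [CStarMatrix.mul_apply]
      simp [r, CStarMatrix.star_apply]
    obtain ⟨c, hc⟩ := isPosElem_sum_star_mul_self r
    exact ⟨CStarMatrix.ofMatrix.symm c, hsum.trans hc⟩

/-- The previous lemma for the unbundled C⋆-algebra structure on `A`. -/
lemma isPosElem_conjTranspose_mul_self {m n : ℕ} (W : Matrix (Fin m) (Fin n) A) :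
    IsPosElem (Wᴴ * W) :=
  let _ : CStarAlgebra A := {}
  isPosElem_conjTranspose_mul_self_aux W

/-- Positivity in `Mₘ(Mₙ(ℂ))` follows from positive semidefiniteness of the flattened matrix. -/
lemma isPosElem_of_posSemidef_comp {m n : ℕ}
    (M : Matrix (Fin m) (Fin m) (Matrix (Fin n) (Fin n) ℂ))
    (h : (Matrix.comp _ _ _ _ ℂ M).PosSemidef) : IsPosElem M := by
  obtain ⟨B, hB⟩ : ∃ B, Matrix.comp _ _ _ _ ℂ M = star B * B := by
    open scoped MatrixOrder Matrix.Norms.L2Operator in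
    exact CStarAlgebra.nonneg_iff_eq_star_mul_self.mp h.nonneg
  refine ⟨(Matrix.comp _ _ _ _ ℂ).symm B, ?_⟩
  ext i j p q
  have := congrFun (congrFun hB (i, p)) (j, q)
  simpa [Matrix.mul_apply, Matrix.sum_apply, Fintype.sum_prod_type, Matrix.star_apply] using this

/-- `φ` is completely positive iff its dual functional is nonnegative
on the positive elements of `Mₙ(S)`. -/
theorem cp_iff_dualFunc_nonneg_on_pos
    (S : Submodule ℂ A) (h_one : (1 : A) ∈ S) (h_star : ∀ a ∈ S, star a ∈ S)
    (n : ℕ) (φ : S →ₗ[ℂ] Matrix (Fin n) (Fin n) ℂ) :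
    IsCPMap φ ↔
      (∀ s : Matrix (Fin n) (Fin n) S, IsPosElem (matCoe s) → 0 ≤ dualFunc φ s) := by
  constructor
  · intro h s hs
    obtain ⟨B, hB⟩ := h n s hs
    have hφ : ∀ i j, φ (s i j) i j = ∑ k, ∑ l, star (B k i l i) * B k j l j := by
      intro i j
      have := congrFun (congrFun (congrFun (congrFun hB i) j) i) j
      simpa [Matrix.mul_apply, Matrix.sum_apply, Matrix.star_apply] using this
    -- Since `[φ(sᵢⱼ)] = B* B`, `s_φ(s) = ∑ₖₗ |∑ⱼ (Bₖⱼ)ₗⱼ|²`.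
    have key : dualFunc φ s = ∑ k, ∑ l, star (∑ i, B k i l i) * ∑ j, B k j l j := by
      simp only [dualFunc, hφ, star_sum, Finset.sum_mul_sum]
      simp only [← Finset.sum_product', Finset.univ_product_univ]
      refine Finset.sum_bij' (fun x _ => (x.2.2.1, x.2.2.2, x.1, x.2.1))
        (fun x _ => (x.2.2.1, x.2.2.2, x.1, x.2.1)) ?_ ?_ ?_ ?_ ?_ <;> simp
    rw [key]
    exact Finset.sum_nonneg fun k _ => Finset.sum_nonneg fun l _ => star_mul_self_nonneg _
  · intro h m s hs
    apply isPosElem_of_posSemidef_comp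
    apply posSemidef_of_quadratic_nonneg
    intro v
    obtain ⟨b, hb⟩ := hs
    -- The compression `T = V* s V` by the scalar matrix `V j p = v (j, p)`.
    let T : Matrix (Fin n) (Fin n) S := Matrix.of fun p q =>
      ∑ j, ∑ k, (star (v (j, p)) * v (k, q)) • s j k
    let W : Matrix (Fin m) (Fin n) A := Matrix.of fun l q => ∑ k, v (k, q) • b l k
    have hs' : ∀ j k, (s j k : A) = ∑ l, star (b l j) * b l k := fun j k => by
      have := congrFun (congrFun hb j) k
      simpa [matCoe, Matrix.mul_apply, Matrix.star_apply] using this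
    have hT : matCoe T = Wᴴ * W := by
      ext p q
      simp only [matCoe, T, W, Matrix.of_apply, Matrix.mul_apply, Matrix.conjTranspose_apply,
        AddSubmonoidClass.coe_finsetSum, Submodule.coe_smul, hs', star_sum, star_smul,
        Finset.sum_mul_sum, smul_mul_smul_comm, Finset.smul_sum]
      refine Eq.trans ?_ Finset.sum_comm
      exact Finset.sum_congr rfl fun j _ => Finset.sum_comm
    -- The quadratic form of `[φ(sⱼₖ)]` at `v` is `s_φ(T)`.
    have hq := h T (hT ▸ isPosElem_conjTranspose_mul_self W)
    convert hq using 1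
    simp only [dualFunc, T, Matrix.of_apply, map_sum, map_smul, Matrix.sum_apply, Matrix.smul_apply,
      dotProduct, Matrix.mulVec, Fintype.sum_prod_type, Finset.mul_sum, Matrix.comp_apply,
      Matrix.map_apply, Pi.star_apply, smul_eq_mul]
    rw [Finset.sum_comm]
    refine Finset.sum_congr rfl fun p _ => ?_
    rw [Finset.sum_comm (γ := Fin n)]
    refine Finset.sum_congr rfl fun j _ => ?_
    rw [Finset.sum_comm]
    simp only [mul_assoc, mul_comm, mul_left_comm]
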